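/- Let n ≥ N(Y), let b ∈ ℕ with b ≥ s + 2, and let j ∈ H_{20}. Then there exists α ∈ [0,1] such that the function τ_j(x) = α·∫_{x_j−π}^{x} t_{j+10}(u) du + (1−α)·∫_{x_j−π}^{x} t_{j−10}(u) du satisfies τ_j(x_j + π) = π. -/

import Mathlib

open Real Set MeasureTheory

noncomputable def trigPi (s : ℕ) (y : ℤ → ℝ) (x : ℝ) : ℝ :=
  ∏ i ∈ Finset.range (2 * s), Real.sin ((x - y ((i : ℤ) + 1)) / 2)

noncomputable def xnode (n : ℕ) (j : ℤ) : ℝ := -(j : ℝ) * (Real.pi / n)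

noncomputable def jIdx (y : ℤ → ℝ) (n : ℕ) (i : ℤ) : ℤ := ⌈-(y i) * n / Real.pi⌉

noncomputable def Oint (y : ℤ → ℝ) (n m : ℕ) (i : ℤ) : Set ℝ :=
  Set.Ioo (xnode n (jIdx y n i + m + 1)) (xnode n (jIdx y n i - m))

noncomputable def Oall (y : ℤ → ℝ) (n m : ℕ) : Set ℝ := ⋃ i : ℤ, Oint y n m i

def memH (y : ℤ → ℝ) (n m : ℕ) (j : ℤ) : Prop := xnode n j ∉ Oall y n m

noncomputable def Gam (n : ℕ) (j : ℤ) (x : ℝ) : ℝ :=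
  min 1 (1 / (n * |Real.sin ((x - (xnode n j + Real.pi / n / 2)) / 2)|))

noncomputable def Jker (n b : ℕ) (j : ℤ) (x : ℝ) : ℝ :=
  (Real.sin (n * (x - xnode n j) / 2) / Real.sin ((x - xnode n j) / 2)) ^ (2 * b) +
    (Real.sin (n * (x - xnode n (j - 1)) / 2) / Real.sin ((x - xnode n (j - 1)) / 2)) ^ (2 * b)

noncomputable def tfun (s : ℕ) (y : ℤ → ℝ) (n b : ℕ) (j : ℤ) (x : ℝ) : ℝ :=
  (∫ u in (xnode n j - Real.pi)..x, Jker n b j u * trigPi s y u) /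
    (∫ u in (xnode n j - Real.pi)..(xnode n j + Real.pi), Jker n b j u * trigPi s y u)

noncomputable def chiFun (n : ℕ) (j : ℤ) (x : ℝ) : ℝ := if x ≤ xnode n j then 0 else 1

def IsTrigPoly (m : ℕ) (P : ℝ → ℝ) : Prop :=
  ∃ a b : ℕ → ℝ, ∀ x : ℝ,
    P x = a 0 + ∑ k ∈ Finset.Icc 1 m, (a k * Real.cos (k * x) + b k * Real.sin (k * x))

noncomputable def omegaMod (k : ℕ) (f : ℝ → ℝ) (t : ℝ) : ℝ :=
  sSup {v : ℝ | ∃ δ x : ℝ, 0 < δ ∧ δ ≤ t ∧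
    v = |∑ i ∈ Finset.range (k + 1), (-1 : ℝ) ^ (k - i) * (k.choose i : ℝ) * f (x + i * δ)|}

noncomputable def taufun (s : ℕ) (y : ℤ → ℝ) (n b : ℕ) (j : ℤ) (α : ℝ) (x : ℝ) : ℝ :=
  α * (∫ u in (xnode n j - Real.pi)..x, tfun s y n b (j + 10) u) +
    (1 - α) * (∫ u in (xnode n j - Real.pi)..x, tfun s y n b (j - 10) u)

noncomputable def PsiCap (a ht hh x : ℝ) : ℝ :=
  max (x - a) 0 ^ 3 + 3 * ht * max (x - a) 0 ^ 2 + hh * max (x - a) 0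

noncomputable def qPoly (dj h x : ℝ) : ℝ :=
  x ^ 4 / (8 * Real.pi) + ((Real.pi - dj) / (2 * Real.pi)) * x ^ 3 +
    ((5 * dj ^ 2 - 6 * dj * Real.pi - h ^ 2) / (4 * Real.pi)) * x ^ 2 +
    ((Real.pi - dj) * (5 * dj ^ 2 - 2 * Real.pi ^ 2 - h ^ 2) / (2 * Real.pi)) * x

/-!
Write `h = π / n`, and let `p` be the integrand of `t_k`, recentred at `x_k` and normalised by
`Π(x_k)`. Integrating the primitive of a periodic function over a period gives
`∫_{a-π}^{a+π} t_k = a + π - x_k - (∫ v p(v) dv) / (∫ p(v) dv)`, with `v` ranging over `[-π, π]`.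
The barycentre of `p` lies within `10 h` of `0`: it suffices that `∫ w p > 0` whenever
`|w(v) - 10 h| ≤ |v|`. Since `x_k` stays `9 h` away from the zeros of `Π`, the kernel `p` is
nonnegative on `|v| ≤ 9 h` and at least `(n / 2)^{2b}` on `(0, h)`, while for `|v| ≥ 9 h` it is at
most `52 (h / |v|)^4 (n / 2)^{2b}`, so that its tail cannot change the sign.

With `a = x_j`, the node `x_{j+10} = x_j - 10 h` gives an integral at least `π` and
`x_{j-10} = x_j + 10 h` one at most `π`; some convex combination is exactly `π`.
-/

section Primitive

variable {f : ℝ → ℝ}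

theorem integral_primitive_eq_integral_sub_mul {a b : ℝ} (hf : IntervalIntegrable f volume a b) :
    ∫ x in a..b, (∫ u in a..x, f u) = ∫ u in a..b, (b - u) * f u := by
  set F : ℝ → ℝ := fun x => ∫ u in a..x, f u
  have hF : AbsolutelyContinuousOnInterval F a b :=
    hf.absolutelyContinuousOnInterval_intervalIntegral (by simp)
  have hsub : AbsolutelyContinuousOnInterval (fun x => b - x) a b :=
    ContDiffOn.absolutelyContinuousOnInterval (by fun_prop)
  have hparts : ∫ u in a..b, (b - u) * deriv F u = ∫ x in a..b, F x := by
    rw [hsub.integral_mul_deriv_eq_deriv_mul hF]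
    simp [F]
  rw [← hparts]
  refine intervalIntegral.integral_congr_ae ?_
  filter_upwards [hf.ae_hasDerivAt_integral] with x hx hxab
  rw [(hx (uIoc_subset_uIcc hxab) a (by simp)).deriv]

theorem integral_primitive_eq_of_periodic {T : ℝ} (hf : Function.Periodic f T)
    (hi : ∀ p q, IntervalIntegrable f volume p q) (a c : ℝ) :
    ∫ x in a..a + T, (∫ u in c..x, f u) = ∫ u in c..c + T, (a + T - u) * f u := by
  set F : ℝ → ℝ := fun x => ∫ u in c..x, f u
  set D := ∫ u in c..c + T, f u
  have hFi : ∀ p q, IntervalIntegrable F volume p q := fun p q =>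
    (intervalIntegral.continuous_primitive hi c).intervalIntegrable p q
  have hF_add : ∀ x, F (x + T) = F x + D := fun x => hf.intervalIntegral_add_eq_add c x hi
  have hshift : ∫ x in c + T..a + T, F x = (∫ x in c..a, F x) + (a - c) * D := by
    rw [← intervalIntegral.integral_comp_add_right]
    simp only [hF_add]
    rw [intervalIntegral.integral_add (hFi c a) (by simp)]
    simp
  have hmove : ∫ x in a..a + T, F x = (∫ x in c..c + T, F x) + (a - c) * D := by
    have hleft := intervalIntegral.integral_add_adjacent_intervals (hFi c a) (hFi a (a + T))
    have hright :=
      intervalIntegral.integral_add_adjacent_intervals (hFi c (c + T)) (hFi (c + T) (a + T))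
    linarith
  rw [hmove, integral_primitive_eq_integral_sub_mul (hi c (c + T)),
    ← intervalIntegral.integral_const_mul,
    ← intervalIntegral.integral_add ((hi _ _).continuousOn_mul (by fun_prop))
      ((hi _ _).const_mul _)]
  congr 1 with u
  ring

end Primitive

section Concentration

variable {q : ℝ → ℝ}

theorem abs_integral_le_of_abs_le_div_pow {a b K : ℝ} {m : ℕ} (ha : 0 < a) (hab : a ≤ b)
    (hq : ∀ v ∈ Icc a b, |q v| ≤ K / v ^ (m + 2)) :
    |∫ v in a..b, q v| ≤ K / ((m + 1) * a ^ (m + 1)) := by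
  have hb : 0 < b := ha.trans_le hab
  have hK : 0 ≤ K := by
    have h := (abs_nonneg _).trans (hq a (left_mem_Icc.mpr hab))
    rwa [le_div_iff₀ (by positivity), zero_mul] at h
  have h0 : (0 : ℝ) ∉ uIcc a b := by
    rw [uIcc_of_le hab]
    exact fun h => ha.not_ge h.1
  have hpow : ∀ v : ℝ, K / v ^ (m + 2) = K * v ^ (-(m + 2 : ℕ) : ℤ) := fun v => by
    rw [zpow_neg, zpow_natCast, div_eq_mul_inv]
  have hint : IntervalIntegrable (fun v : ℝ => K / v ^ (m + 2)) volume a b := by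
    simp only [hpow]
    exact (intervalIntegral.intervalIntegrable_zpow (Or.inr h0)).const_mul K
  calc |∫ v in a..b, q v| ≤ ∫ v in a..b, K / v ^ (m + 2) :=
        intervalIntegral.norm_integral_le_of_norm_le hab
          (f := q) (ae_of_all _ fun v hv => hq v (Ioc_subset_Icc_self hv)) hint
    _ = K / (m + 1) * (1 / a ^ (m + 1) - 1 / b ^ (m + 1)) := by
        simp only [hpow]
        rw [intervalIntegral.integral_const_mul, integral_zpow (Or.inr ⟨by omega, h0⟩),
          show -((m + 2 : ℕ) : ℤ) + 1 = -((m + 1 : ℕ) : ℤ) by push_cast; ring,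
          zpow_neg, zpow_neg, zpow_natCast, zpow_natCast]
        have hm : (m : ℝ) + 1 ≠ 0 := by positivity
        rw [show ((-((m + 2 : ℕ) : ℤ) : ℤ) : ℝ) + 1 = -(m + 1) by push_cast; ring]
        field_simp
        ring
    _ ≤ K / (m + 1) * (1 / a ^ (m + 1)) := by
        gcongr
        exact sub_le_self _ (by positivity)
    _ = K / ((m + 1) * a ^ (m + 1)) := by field_simp

theorem integral_pos_of_concentrated {h δ R A K : ℝ} (h0 : 0 < h) (hδ : h ≤ δ) (hR : δ ≤ R)
    (hi : ∀ a b, IntervalIntegrable q volume a b) (hnear : ∀ v, |v| ≤ δ → 0 ≤ q v)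
    (hcore : ∀ v ∈ Ioo 0 h, A ≤ q v)
    (htail : ∀ v, δ ≤ |v| → |v| ≤ R → |q v| ≤ K / |v| ^ 3) (hAK : K / δ ^ 2 < A * h) :
    0 < ∫ v in -R..R, q v := by
  have hδ0 : 0 < δ := h0.trans_le hδ
  have tail {g : ℝ → ℝ} (hg : ∀ v ∈ Icc δ R, |g v| ≤ K / v ^ 3) :
      |∫ v in δ..R, g v| ≤ K / (2 * δ ^ 2) := by
    simpa [one_add_one_eq_two] using abs_integral_le_of_abs_le_div_pow (m := 1) hδ0 hR hg
  have hright : |∫ v in δ..R, q v| ≤ K / (2 * δ ^ 2) := tail fun v hv => by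
    simpa [abs_of_pos (hδ0.trans_le hv.1), hv.1, hv.2] using htail v
  have hleft : |∫ v in δ..R, q (-v)| ≤ K / (2 * δ ^ 2) := tail fun v hv => by
    simpa [abs_of_pos (hδ0.trans_le hv.1), hv.1, hv.2] using htail (-v)
  rw [intervalIntegral.integral_comp_neg] at hleft
  have hmid : A * h ≤ ∫ v in 0..h, q v := by
    have := intervalIntegral.integral_mono_on_of_le_Ioo h0.le
      intervalIntegrable_const (hi 0 h) hcore
    rwa [intervalIntegral.integral_const, sub_zero, smul_eq_mul, mul_comm] at this
  have hneg : 0 ≤ ∫ v in -δ..0, q v :=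
    intervalIntegral.integral_nonneg (by linarith) fun v hv =>
      hnear v (abs_le.mpr ⟨hv.1, by linarith [hv.2]⟩)
  have hpos : 0 ≤ ∫ v in h..δ, q v :=
    intervalIntegral.integral_nonneg hδ fun v hv =>
      hnear v (abs_le.mpr ⟨by linarith [hv.1], hv.2⟩)
  have hsplit : ∫ v in -R..R, q v = (∫ v in -R..-δ, q v) + (∫ v in -δ..0, q v) +
      (∫ v in 0..h, q v) + (∫ v in h..δ, q v) + ∫ v in δ..R, q v := by
    simp only [intervalIntegral.integral_add_adjacent_intervals (hi _ _) (hi _ _)]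
  have hK : K / δ ^ 2 = K / (2 * δ ^ 2) + K / (2 * δ ^ 2) := by field_simp; ring
  rw [hsplit]
  linarith [(abs_le.mp hleft).1, (abs_le.mp hright).1]

end Concentration

section Sine

theorem abs_sin_nat_mul_le (n : ℕ) (x : ℝ) : |sin (n * x)| ≤ n * |sin x| := by
  induction n with
  | zero => simp
  | succ n ih =>
    calc |sin ((n + 1 : ℕ) * x)| = |sin (n * x) * cos x + cos (n * x) * sin x| := by
          rw [← sin_add]
          push_cast
          ring_nf
      _ ≤ |sin (n * x)| * |cos x| + |cos (n * x)| * |sin x| := by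
          rw [← abs_mul, ← abs_mul]
          exact abs_add_le _ _
      _ ≤ n * |sin x| * 1 + 1 * |sin x| := by
          gcongr
          · exact abs_cos_le_one x
          · exact abs_cos_le_one _
      _ = (n + 1 : ℕ) * |sin x| := by push_cast; ring

theorem exists_int_abs_add_mul_pi_le (x : ℝ) : ∃ m : ℤ, |x + m * π| ≤ π / 2 := by
  refine ⟨-round (x / π), ?_⟩
  have h : x + ((-round (x / π) : ℤ) : ℝ) * π = (x / π - round (x / π)) * π := by
    push_cast
    field_simp [pi_ne_zero]
    ring
  rw [h, abs_mul, abs_of_pos pi_pos]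
  nlinarith [abs_sub_round (x / π), pi_pos]

variable {δ x : ℝ}

theorem le_pi_div_two_of_forall_le_abs_add (h : ∀ m : ℤ, δ ≤ |x + m * π|) : δ ≤ π / 2 :=
  let ⟨m, hm⟩ := exists_int_abs_add_mul_pi_le x
  (h m).trans hm

theorem sin_le_abs_sin_of_forall_le_abs_add (h0 : 0 ≤ δ) (h : ∀ m : ℤ, δ ≤ |x + m * π|) :
    sin δ ≤ |sin x| := by
  obtain ⟨m, hm⟩ := exists_int_abs_add_mul_pi_le x
  calc sin δ ≤ sin |x + m * π| :=
        sin_le_sin_of_le_of_le_pi_div_two (by linarith [pi_pos]) hm (h m)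
    _ = |sin (x + m * π)| :=
        (abs_sin_eq_sin_abs_of_abs_le_pi (by linarith [pi_pos])).symm
    _ = |sin x| := by simp [sin_add_int_mul_pi, abs_mul]

theorem cot_le_one_div (h0 : 0 < δ) (h1 : δ ≤ π / 2) : cot δ ≤ 1 / δ := by
  rcases h1.eq_or_lt with rfl | h1
  · rw [cot_eq_cos_div_sin, cos_pi_div_two, zero_div]
    positivity
  · rw [← tan_inv_eq_cot, ← one_div]
    exact one_div_le_one_div_of_le h0 (le_tan h0.le h1)

theorem abs_cot_le_cot (h0 : 0 < δ) (h1 : δ ≤ π / 2) (hx : sin δ ≤ |sin x|) :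
    |cot x| ≤ cot δ := by
  have hs : 0 < sin δ := sin_pos_of_pos_of_lt_pi h0 (by linarith)
  have hc : 0 ≤ cos δ := cos_nonneg_of_mem_Icc ⟨by linarith, h1⟩
  have hcos : |cos x| ≤ cos δ := by
    refine abs_le_of_sq_le_sq ?_ hc
    have : sin δ ^ 2 ≤ sin x ^ 2 := by rw [← sq_abs (sin x)]; gcongr
    linarith [sin_sq_add_cos_sq δ, sin_sq_add_cos_sq x]
  rw [cot_eq_cos_div_sin, cot_eq_cos_div_sin, abs_div]
  gcongr

theorem sin_add_div_sin (hx : sin x ≠ 0) (v : ℝ) :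
    sin (x + v) / sin x = cos v + cot x * sin v := by
  rw [sin_add, cot_eq_cos_div_sin]
  field_simp

theorem one_sub_div_mul_sin_le_sin_sub {w : ℝ} (h0 : 0 < δ) (h1 : δ ≤ π) (hw0 : 0 ≤ w)
    (hw : w ≤ δ) : (1 - w / δ) * sin δ ≤ sin (δ - w) := by
  have h := strictConcaveOn_sin_Icc.concaveOn.2 (left_mem_Icc.mpr pi_pos.le) ⟨h0.le, h1⟩
    (div_nonneg hw0 h0.le) (sub_nonneg.mpr ((div_le_one h0).mpr hw)) (by ring)
  have he : (1 - w / δ) * δ = δ - w := by field_simp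
  simpa [he] using h

theorem abs_sin_add_div_sin_le (h0 : 0 < δ) (h1 : δ ≤ π / 2) (hx : sin δ ≤ |sin x|) (v : ℝ) :
    |sin (x + v) / sin x| ≤ 1 + |v| / δ := by
  have hx0 : sin x ≠ 0 :=
    abs_pos.mp ((sin_pos_of_pos_of_lt_pi h0 (by linarith)).trans_le hx)
  rw [sin_add_div_sin hx0]
  calc |cos v + cot x * sin v| ≤ |cos v| + |cot x| * |sin v| := by
        rw [← abs_mul]; exact abs_add_le _ _
    _ ≤ 1 + 1 / δ * |v| :=
        add_le_add (abs_cos_le_one v) (mul_le_mul ((abs_cot_le_cot h0 h1 hx).trans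
          (cot_le_one_div h0 h1)) abs_sin_le_abs (abs_nonneg _) (by positivity))
    _ = 1 + |v| / δ := by ring

theorem one_sub_abs_div_le_sin_add_div_sin {v : ℝ} (h0 : 0 < δ) (h1 : δ ≤ π / 2)
    (hx : sin δ ≤ |sin x|) (hv : |v| ≤ δ) : 1 - |v| / δ ≤ sin (x + v) / sin x := by
  have hδ : 0 < sin δ := sin_pos_of_pos_of_lt_pi h0 (by linarith)
  have hsin : |sin v| = sin |v| := abs_sin_eq_sin_abs_of_abs_le_pi (by linarith)
  calc 1 - |v| / δ ≤ sin (δ + -|v|) / sin δ := by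
        rw [le_div_iff₀ hδ]
        exact one_sub_div_mul_sin_le_sin_sub h0 (by linarith) (abs_nonneg v) hv
    _ = cos v - cot δ * |sin v| := by
        rw [sin_add_div_sin hδ.ne', cos_neg, cos_abs, sin_neg, hsin]; ring
    _ ≤ cos v - |cot x * sin v| := by
        rw [abs_mul]
        gcongr
        exact abs_cot_le_cot h0 h1 hx
    _ ≤ cos v + cot x * sin v := by linarith [neg_abs_le (cot x * sin v)]
    _ = sin (x + v) / sin x := (sin_add_div_sin (abs_pos.mp (hδ.trans_le hx)) v).symm

end Sine

section TrigPi

variable (s : ℕ) (y : ℤ → ℝ)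

theorem continuous_trigPi : Continuous (trigPi s y) := by
  unfold trigPi
  fun_prop

theorem trigPi_periodic : Function.Periodic (trigPi s y) (2 * π) := by
  intro x
  have h (i : ℕ) : sin ((x + 2 * π - y (i + 1)) / 2) = -sin ((x - y (i + 1)) / 2) := by
    rw [← sin_add_pi]
    ring_nf
  simp [trigPi, h, Finset.prod_neg]

theorem trigPi_add_div_trigPi (x v : ℝ) :
    trigPi s y (x + v) / trigPi s y x = ∏ i ∈ Finset.range (2 * s),
      sin ((x - y (i + 1)) / 2 + v / 2) / sin ((x - y (i + 1)) / 2) := by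
  rw [trigPi, trigPi, ← Finset.prod_div_distrib]
  refine Finset.prod_congr rfl fun i _ => ?_
  congr 2
  ring

variable {s y} {δ x : ℝ}

theorem trigPi_ne_zero (hx : ∀ i, sin ((x - y i) / 2) ≠ 0) : trigPi s y x ≠ 0 :=
  Finset.prod_ne_zero_iff.mpr fun _ _ => hx _

theorem abs_trigPi_add_div_trigPi_le (h0 : 0 < δ) (h1 : δ ≤ π)
    (hx : ∀ i, sin (δ / 2) ≤ |sin ((x - y i) / 2)|) (v : ℝ) :
    |trigPi s y (x + v) / trigPi s y x| ≤ (1 + |v| / δ) ^ (2 * s) := by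
  rw [trigPi_add_div_trigPi, Finset.abs_prod]
  rw [← Finset.card_range (2 * s), ← Finset.prod_const, Finset.card_range]
  refine Finset.prod_le_prod (fun _ _ => abs_nonneg _) fun i _ => ?_
  have := abs_sin_add_div_sin_le (by positivity) (by linarith) (hx (i + 1)) (v / 2)
  rwa [abs_div v, abs_two, div_div_div_cancel_right₀ two_ne_zero] at this

theorem one_sub_abs_div_pow_le_trigPi_add_div_trigPi {v : ℝ} (h0 : 0 < δ) (h1 : δ ≤ π)
    (hx : ∀ i, sin (δ / 2) ≤ |sin ((x - y i) / 2)|) (hv : |v| ≤ δ) :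
    (1 - |v| / δ) ^ (2 * s) ≤ trigPi s y (x + v) / trigPi s y x := by
  have hv' : 0 ≤ 1 - |v| / δ := sub_nonneg.mpr ((div_le_one h0).mpr hv)
  rw [trigPi_add_div_trigPi, ← Finset.card_range (2 * s), ← Finset.prod_const, Finset.card_range]
  refine Finset.prod_le_prod (fun _ _ => hv') fun i _ => ?_
  have := one_sub_abs_div_le_sin_add_div_sin (v := v / 2) (by positivity) (by linarith)
    (hx (i + 1)) (by rw [abs_div, abs_two]; linarith)
  rwa [abs_div v, abs_two, div_div_div_cancel_right₀ two_ne_zero] at this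

end TrigPi

section SinQuotient

/-- The ratio `sin (n v / 2) / sin (v / 2)`, whose even powers are the Jackson kernels. It takes
the value `0`, not `±n`, at the zeros of the denominator. -/
noncomputable def sinQuotient (n : ℕ) (v : ℝ) : ℝ := sin (n * v / 2) / sin (v / 2)

variable (n : ℕ)

theorem abs_sinQuotient_le (v : ℝ) : |sinQuotient n v| ≤ n := by
  rw [sinQuotient, abs_div, mul_div_assoc]
  exact div_le_of_le_mul₀ (abs_nonneg _) n.cast_nonneg (abs_sin_nat_mul_le n _)

theorem measurable_sinQuotient : Measurable (sinQuotient n) := by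
  unfold sinQuotient
  fun_prop

theorem sinQuotient_pow_periodic (b : ℕ) :
    Function.Periodic (fun v => sinQuotient n v ^ (2 * b)) (2 * π) := by
  intro v
  have h : |sinQuotient n (v + 2 * π)| = |sinQuotient n v| := by
    rw [sinQuotient, sinQuotient, show n * (v + 2 * π) / 2 = n * v / 2 + n * π by ring,
      show (v + 2 * π) / 2 = v / 2 + π by ring, sin_add_nat_mul_pi, sin_add_pi]
    simp [abs_div, abs_mul]
  simp only [pow_mul, ← sq_abs (sinQuotient _ _), h]

variable {n}

theorem two_mul_div_pi_le_sinQuotient {v : ℝ} (hn : 0 < n) (h0 : 0 < v) (hv : v ≤ π / n) :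
    2 * n / π ≤ sinQuotient n v := by
  have hnv : n * v ≤ π := by
    rwa [le_div_iff₀ (by positivity), mul_comm] at hv
  have hvπ : v ≤ π := hv.trans (div_le_self pi_pos.le (by exact_mod_cast hn))
  have hs : 0 < sin (v / 2) := sin_pos_of_pos_of_lt_pi (by linarith) (by linarith [pi_pos])
  rw [sinQuotient, le_div_iff₀ hs]
  calc 2 * n / π * sin (v / 2) ≤ 2 * n / π * (v / 2) := by
        gcongr
        exact sin_le (by linarith)
    _ = 2 / π * (n * v / 2) := by ring
    _ ≤ sin (n * v / 2) := mul_le_sin (by positivity) (by linarith)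

theorem abs_sinQuotient_add_le {δ v w : ℝ} (h0 : 0 < δ) (hδ : δ ≤ |v|) (hv : |v| ≤ π)
    (hw : |w| < δ) : |sinQuotient n (v + w)| ≤ π / ((1 - |w| / δ) * |v|) := by
  have hv0 : 0 < |v| := h0.trans_le hδ
  have hwδ : |w| / |v| ≤ |w| / δ := by gcongr
  have hw1 : 0 < 1 - |w| / δ := sub_pos.mpr ((div_lt_one h0).mpr hw)
  have habs : sin (|v| / 2) = |sin (v / 2)| := by
    rw [abs_sin_eq_sin_abs_of_abs_le_pi] <;> rw [abs_div, abs_two]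
    linarith
  have hjordan : |v| / π ≤ |sin (v / 2)| := by
    calc |v| / π = 2 / π * (|v| / 2) := by ring
      _ ≤ sin (|v| / 2) := mul_le_sin (by positivity) (by linarith)
      _ = |sin (v / 2)| := habs
  have hs0 : 0 < |sin (v / 2)| := lt_of_lt_of_le (by positivity) hjordan
  have hratio : 1 - |w| / δ ≤ sin (v / 2 + w / 2) / sin (v / 2) := by
    have := one_sub_abs_div_le_sin_add_div_sin (v := w / 2) (by positivity) (by linarith)
      habs.le (by rw [abs_div, abs_two]; linarith)
    rw [abs_div w, abs_two, div_div_div_cancel_right₀ two_ne_zero] at this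
    linarith
  have hden : (1 - |w| / δ) * |v| / π ≤ |sin ((v + w) / 2)| := by
    calc (1 - |w| / δ) * |v| / π = (1 - |w| / δ) * (|v| / π) := by ring
      _ ≤ |sin (v / 2 + w / 2) / sin (v / 2)| * |sin (v / 2)| := by
          gcongr
          exact hratio.trans (le_abs_self _)
      _ = |sin ((v + w) / 2)| := by
          rw [abs_div, div_mul_cancel₀ _ hs0.ne', add_div]
  rw [sinQuotient, abs_div, ← inv_div ((1 - |w| / δ) * |v|) π, ← one_div]
  exact div_le_div₀ zero_le_one (abs_sin_le_one _) (by positivity) hden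

end SinQuotient

section Jker

theorem xnode_add (n : ℕ) (j k : ℤ) : xnode n (j + k) = xnode n j - k * (π / n) := by
  simp only [xnode]
  push_cast
  ring

theorem xnode_sub (n : ℕ) (j k : ℤ) : xnode n (j - k) = xnode n j + k * (π / n) := by
  simp only [xnode]
  push_cast
  ring

variable (n b : ℕ) (k : ℤ)

theorem Jker_eq (x : ℝ) : Jker n b k x =
    sinQuotient n (x - xnode n k) ^ (2 * b) + sinQuotient n (x - xnode n (k - 1)) ^ (2 * b) :=
  rfl

theorem Jker_xnode_add (v : ℝ) : Jker n b k (xnode n k + v) =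
    sinQuotient n v ^ (2 * b) + sinQuotient n (v - π / n) ^ (2 * b) := by
  rw [Jker_eq, xnode_sub]
  congr 3 <;> push_cast <;> ring

theorem Jker_nonneg (x : ℝ) : 0 ≤ Jker n b k x := by
  rw [Jker_eq, pow_mul, pow_mul]
  positivity

theorem measurable_Jker : Measurable (Jker n b k) := by
  have := measurable_sinQuotient n
  unfold Jker
  fun_prop

theorem Jker_le (x : ℝ) : Jker n b k x ≤ 2 * (n : ℝ) ^ (2 * b) := by
  have h (v : ℝ) : sinQuotient n v ^ (2 * b) ≤ (n : ℝ) ^ (2 * b) := by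
    rw [← (even_two_mul b).pow_abs]
    gcongr
    exact abs_sinQuotient_le n v
  rw [Jker_eq]
  linarith [h (x - xnode n k), h (x - xnode n (k - 1))]

theorem intervalIntegrable_Jker (p q : ℝ) : IntervalIntegrable (Jker n b k) volume p q :=
  (intervalIntegrable_const (c := 2 * (n : ℝ) ^ (2 * b))).mono_fun
    (measurable_Jker n b k).aestronglyMeasurable (ae_of_all _ fun x => by
      simpa [abs_of_nonneg (Jker_nonneg n b k x)] using Jker_le n b k x)

theorem Jker_periodic : Function.Periodic (Jker n b k) (2 * π) := by
  intro x
  simp only [Jker_eq, add_sub_right_comm]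
  exact congrArg₂ (· + ·) (sinQuotient_pow_periodic n b _) (sinQuotient_pow_periodic n b _)

variable {n}

theorem pow_le_Jker_xnode_add (hn : 0 < n) {v : ℝ} (hv : v ∈ Ioo 0 (π / n)) :
    (2 * n / π) ^ (2 * b) ≤ Jker n b k (xnode n k + v) := by
  have h := two_mul_div_pi_le_sinQuotient hn hv.1 hv.2.le
  rw [Jker_xnode_add, pow_mul (sinQuotient n (v - π / n))]
  have : (2 * n / π) ^ (2 * b) ≤ sinQuotient n v ^ (2 * b) := by gcongr
  linarith [pow_nonneg (sq_nonneg (sinQuotient n (v - π / n))) b]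

theorem Jker_xnode_add_le (hn : 0 < n) {v : ℝ} (hv : 9 * (π / n) ≤ |v|) (hvπ : |v| ≤ π) :
    Jker n b k (xnode n k + v) ≤ 2 * (9 / 8 * (π / |v|)) ^ (2 * b) := by
  have hh : 0 < π / n := by positivity
  have key {w : ℝ} (hw : |w| ≤ π / n) :
      sinQuotient n (v + w) ^ (2 * b) ≤ (9 / 8 * (π / |v|)) ^ (2 * b) := by
    have hv0 : 0 < |v| := by linarith
    have hw9 : |w| / (9 * (π / n)) ≤ 1 / 9 := by
      rw [div_le_div_iff₀ (by positivity) (by norm_num)]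
      linarith
    rw [← (even_two_mul b).pow_abs]
    gcongr
    calc |sinQuotient n (v + w)| ≤ π / ((1 - |w| / (9 * (π / n))) * |v|) :=
          abs_sinQuotient_add_le (by positivity) hv hvπ (by linarith)
      _ ≤ π / (8 / 9 * |v|) := by
          gcongr
          linarith
      _ = 9 / 8 * (π / |v|) := by
          field_simp
  have h₁ := key (w := 0) (by simp [hh.le])
  have h₂ := key (w := -(π / n)) (by rw [abs_neg, abs_of_pos hh])
  rw [add_zero] at h₁
  rw [← sub_eq_add_neg] at h₂
  rw [Jker_xnode_add]
  linarith

end Jker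

section RecentredKernel

theorem pow_mul_pow_le_pow {r t : ℝ} {i k m : ℕ} (hr : 0 ≤ r) (hr1 : r ≤ 1) (ht : 0 ≤ t)
    (hrt : r * t ≤ 1) (hk : m + i ≤ k) : r ^ k * t ^ i ≤ r ^ m := by
  calc r ^ k * t ^ i ≤ r ^ (m + i) * t ^ i := by
        gcongr ?_ * _
        exact pow_le_pow_of_le_one hr hr1 hk
    _ = r ^ m * (r * t) ^ i := by ring
    _ ≤ r ^ m := mul_le_of_le_one_right (by positivity) (pow_le_one₀ (by positivity) hrt)

/-- The integrand `Jker * trigPi` of `tfun`, recentred at the node `xnode n k` and divided by the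
value of `trigPi` there, which makes it nonnegative near `0` whatever the sign of `trigPi`. -/
noncomputable def recentredKernel (s : ℕ) (y : ℤ → ℝ) (n b : ℕ) (k : ℤ) (v : ℝ) : ℝ :=
  Jker n b k (xnode n k + v) * (trigPi s y (xnode n k + v) / trigPi s y (xnode n k))

variable (s : ℕ) (y : ℤ → ℝ) (n b : ℕ) (k : ℤ)

theorem intervalIntegrable_Jker_mul_trigPi (p q : ℝ) :
    IntervalIntegrable (fun u => Jker n b k u * trigPi s y u) volume p q :=
  (intervalIntegrable_Jker n b k p q).mul_continuousOn (continuous_trigPi s y).continuousOn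

theorem intervalIntegrable_recentredKernel (p q : ℝ) :
    IntervalIntegrable (recentredKernel s y n b k) volume p q := by
  unfold recentredKernel
  simpa [mul_div_assoc] using
    ((intervalIntegrable_Jker_mul_trigPi s y n b k (xnode n k + p) (xnode n k + q)).comp_add_left
      (xnode n k)).div_const (trigPi s y (xnode n k))

variable {s y n b k} (hn : 0 < n) (hδ : 9 * (π / n) ≤ π)
  (hx : ∀ i, sin (9 * (π / n) / 2) ≤ |sin ((xnode n k - y i) / 2)|)

include hn hδ hx

theorem recentredKernel_nonneg {v : ℝ} (hv : |v| ≤ 9 * (π / n)) :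
    0 ≤ recentredKernel s y n b k v := by
  have hδ0 : 0 < 9 * (π / n) := by positivity
  refine mul_nonneg (Jker_nonneg n b k _) (le_trans ?_
    (one_sub_abs_div_pow_le_trigPi_add_div_trigPi hδ0 hδ hx hv))
  exact pow_nonneg (sub_nonneg.mpr ((div_le_one hδ0).mpr hv)) _

theorem pow_le_recentredKernel (hb : s ≤ b) {v : ℝ} (hv : v ∈ Ioo 0 (π / n)) :
    (n / 2 : ℝ) ^ (2 * b) ≤ recentredKernel s y n b k v := by
  have hδ0 : 0 < 9 * (π / n) := by positivity
  have habs : |v| = v := abs_of_pos hv.1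
  have hv9 : |v| ≤ 9 * (π / n) := by linarith [hv.1, hv.2]
  have hvδ : |v| / (9 * (π / n)) ≤ 1 / 9 := by
    rw [div_le_div_iff₀ hδ0 (by norm_num)]
    linarith [hv.2]
  have hratio : (8 / 9 : ℝ) ^ (2 * b) ≤
      trigPi s y (xnode n k + v) / trigPi s y (xnode n k) :=
    calc (8 / 9 : ℝ) ^ (2 * b) ≤ (8 / 9) ^ (2 * s) :=
          pow_le_pow_of_le_one (by norm_num) (by norm_num) (by omega)
      _ ≤ (1 - |v| / (9 * (π / n))) ^ (2 * s) := by
          gcongr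
          linarith
      _ ≤ _ := one_sub_abs_div_pow_le_trigPi_add_div_trigPi hδ0 hδ hx hv9
  calc (n / 2 : ℝ) ^ (2 * b) ≤ (2 * n / π * (8 / 9)) ^ (2 * b) := by
        gcongr
        rw [div_mul_eq_mul_div, div_le_div_iff₀ two_pos pi_pos]
        nlinarith [pi_lt_d2, (Nat.cast_pos.mpr hn : (0 : ℝ) < n)]
    _ = (2 * n / π) ^ (2 * b) * (8 / 9) ^ (2 * b) := mul_pow _ _ _
    _ ≤ recentredKernel s y n b k v :=
        mul_le_mul (pow_le_Jker_xnode_add b k hn hv) hratio (by positivity)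
          (Jker_nonneg n b k _)

theorem abs_recentredKernel_le (hb : s + 2 ≤ b) {v : ℝ} (hv : 9 * (π / n) ≤ |v|)
    (hvπ : |v| ≤ π) :
    |recentredKernel s y n b k v| ≤ 52 * (π / n / |v|) ^ 4 * (n / 2) ^ (2 * b) := by
  have hδ0 : 0 < 9 * (π / n) := by positivity
  have hv0 : 0 < |v| := hδ0.trans_le hv
  set r := 9 / 4 * (π / n / |v|) with hr
  set t := 2 * |v| / (9 * (π / n)) with ht
  have hr1 : r ≤ 1 := by
    rw [hr, ← mul_div_assoc, div_le_one hv0]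
    linarith
  have hrt : r * t ≤ 1 := by
    rw [hr, ht]
    field_simp
    norm_num
  have hJ : |Jker n b k (xnode n k + v)| ≤ 2 * (n / 2 * r) ^ (2 * b) := by
    rw [abs_of_nonneg (Jker_nonneg n b k _)]
    convert Jker_xnode_add_le b k hn hv hvπ using 3
    rw [hr]
    field_simp
    norm_num
  have hratio : |trigPi s y (xnode n k + v) / trigPi s y (xnode n k)| ≤ t ^ (2 * s) := by
    refine (abs_trigPi_add_div_trigPi_le hδ0 hδ hx v).trans ?_
    gcongr
    rw [ht, mul_div_assoc, two_mul]
    gcongr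
    exact (one_le_div hδ0).mpr hv
  calc |recentredKernel s y n b k v| ≤ 2 * (n / 2 * r) ^ (2 * b) * t ^ (2 * s) := by
        rw [recentredKernel, abs_mul]
        gcongr
    _ = 2 * (n / 2) ^ (2 * b) * (r ^ (2 * b) * t ^ (2 * s)) := by
        rw [mul_pow]
        ring
    -- The growth `t ^ (2 s)` of `trigPi` is absorbed since `r t ≤ 1`; `s + 2 ≤ b` leaves `r ^ 4`.
    _ ≤ 2 * (n / 2) ^ (2 * b) * r ^ 4 := by
        gcongr
        exact pow_mul_pow_le_pow (by positivity) hr1 (by positivity) hrt (by omega)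
    _ = 2 * (9 / 4) ^ 4 * (π / n / |v|) ^ 4 * (n / 2) ^ (2 * b) := by rw [hr]; ring
    _ ≤ 52 * (π / n / |v|) ^ 4 * (n / 2) ^ (2 * b) := by
        gcongr
        norm_num

theorem integral_mul_recentredKernel_pos (hb : s + 2 ≤ b) {w : ℝ → ℝ} (hw : Continuous w)
    (hw10 : ∀ v, |w v - 10 * (π / n)| ≤ |v|) :
    0 < ∫ v in -π..π, w v * recentredKernel s y n b k v := by
  set h := π / n
  have hh : 0 < h := by positivity
  set M : ℝ := (n / 2) ^ (2 * b)
  have hM : 0 < M := by positivity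
  have hw_le (v : ℝ) : 10 * h - |v| ≤ w v := by linarith [(abs_le.mp (hw10 v)).1]
  -- The lower bound `9 h M` beats the tail since `110 / 9 ^ 2 < 9`.
  refine integral_pos_of_concentrated (δ := 9 * h) (A := 9 * h * M) (K := 110 * h ^ 4 * M)
    hh (by linarith) hδ (fun p q => ?_) ?_ ?_ ?_ ?_
  · exact (intervalIntegrable_recentredKernel s y n b k p q).continuousOn_mul hw.continuousOn
  · intro v hv
    exact mul_nonneg (by linarith [hw_le v]) (recentredKernel_nonneg hn hδ hx hv)
  · intro v hv
    have hv0 : |v| = v := abs_of_pos hv.1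
    exact mul_le_mul (by linarith [hw_le v, hv.2])
      (pow_le_recentredKernel hn hδ hx (by omega) hv) hM.le (by linarith [hw_le v, hv.2])
  · intro v hv hvπ
    have hv0 : 0 < |v| := by linarith
    have hwv : |w v| ≤ 19 / 9 * |v| := by
      rw [abs_le]
      constructor <;> linarith [(abs_le.mp (hw10 v)).1, (abs_le.mp (hw10 v)).2]
    rw [abs_mul]
    calc |w v| * |recentredKernel s y n b k v| ≤ 19 / 9 * |v| * (52 * (h / |v|) ^ 4 * M) := by
          gcongr
          exact abs_recentredKernel_le hn hδ hx hb hv hvπ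
      _ = 19 / 9 * 52 * h ^ 4 * M / |v| ^ 3 := by field_simp
      _ ≤ 110 * h ^ 4 * M / |v| ^ 3 := by
          gcongr
          norm_num
  · rw [div_lt_iff₀ (by positivity)]
    have : 0 < h ^ 4 * M := by positivity
    linear_combination 619 * this

theorem integral_recentredKernel_pos (hb : s + 2 ≤ b) :
    0 < ∫ v in -π..π, recentredKernel s y n b k v := by
  have hh : 0 < 10 * (π / n) := by positivity
  have := integral_mul_recentredKernel_pos hn hδ hx hb (w := fun _ => 10 * (π / n))
    continuous_const (by simp)
  rw [intervalIntegral.integral_const_mul] at this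
  exact pos_of_mul_pos_right this hh.le

theorem abs_integral_id_mul_recentredKernel_le (hb : s + 2 ≤ b) :
    |∫ v in -π..π, v * recentredKernel s y n b k v| ≤
      10 * (π / n) * ∫ v in -π..π, recentredKernel s y n b k v := by
  have hi := intervalIntegrable_recentredKernel s y n b k (-π) π
  have hadd := integral_mul_recentredKernel_pos hn hδ hx hb (w := fun v => 10 * (π / n) + v)
    (by fun_prop) (by simp)
  have hsub := integral_mul_recentredKernel_pos hn hδ hx hb (w := fun v => 10 * (π / n) - v)
    (by fun_prop) (by simp)
  simp only [add_mul] at hadd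
  simp only [sub_mul] at hsub
  rw [intervalIntegral.integral_add (hi.const_mul _) (hi.continuousOn_mul (by fun_prop)),
    intervalIntegral.integral_const_mul] at hadd
  rw [intervalIntegral.integral_sub (hi.const_mul _) (hi.continuousOn_mul (by fun_prop)),
    intervalIntegral.integral_const_mul] at hsub
  rw [abs_le]
  constructor <;> linarith

end RecentredKernel

section Tfun

variable (s : ℕ) (y : ℤ → ℝ) (n b : ℕ) (k : ℤ)

theorem integral_tfun_eq (a : ℝ) :
    ∫ x in a - π..a + π, tfun s y n b k x =
      (∫ u in xnode n k - π..xnode n k + π, (a + π - u) * (Jker n b k u * trigPi s y u)) /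
        ∫ u in xnode n k - π..xnode n k + π, Jker n b k u * trigPi s y u := by
  have hper : Function.Periodic (fun u => Jker n b k u * trigPi s y u) (2 * π) :=
    (Jker_periodic n b k).mul (trigPi_periodic s y)
  have h := integral_primitive_eq_of_periodic hper
    (intervalIntegrable_Jker_mul_trigPi s y n b k) (a - π) (xnode n k - π)
  simp only [show ∀ z : ℝ, z - π + 2 * π = z + π by intro z; ring] at h
  simp only [tfun]
  rw [intervalIntegral.integral_div, h]

theorem integral_mul_Jker_mul_trigPi (hx : trigPi s y (xnode n k) ≠ 0) (w : ℝ → ℝ) :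
    ∫ u in xnode n k - π..xnode n k + π, w u * (Jker n b k u * trigPi s y u) =
      trigPi s y (xnode n k) *
        ∫ v in -π..π, w (xnode n k + v) * recentredKernel s y n b k v := by
  rw [← intervalIntegral.integral_const_mul, sub_eq_add_neg,
    ← intervalIntegral.integral_comp_add_left _ (xnode n k)]
  congr 1 with v
  simp only [recentredKernel]
  field_simp

variable {s y n b k}

theorem abs_integral_tfun_sub_le (hn : 0 < n) (hδ : 9 * (π / n) ≤ π) (hb : s + 2 ≤ b)
    (hx : ∀ i, sin (9 * (π / n) / 2) ≤ |sin ((xnode n k - y i) / 2)|) (a : ℝ) :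
    |(∫ x in a - π..a + π, tfun s y n b k x) - (a + π - xnode n k)| ≤ 10 * (π / n) := by
  have htrig : trigPi s y (xnode n k) ≠ 0 := by
    have hs : 0 < sin (9 * (π / n) / 2) :=
      sin_pos_of_pos_of_lt_pi (by positivity) (by linarith [pi_pos])
    exact trigPi_ne_zero fun i => abs_pos.mp (hs.trans_le (hx i))
  have hi := intervalIntegrable_recentredKernel s y n b k (-π) π
  have hmass := integral_recentredKernel_pos hn hδ hx hb
  have hmoment := abs_integral_id_mul_recentredKernel_le hn hδ hx hb
  set I := ∫ v in -π..π, recentredKernel s y n b k v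
  set J := ∫ v in -π..π, v * recentredKernel s y n b k v
  have hsplit : ∫ v in -π..π, (a + π - (xnode n k + v)) * recentredKernel s y n b k v =
      (a + π - xnode n k) * I - J := by
    rw [← intervalIntegral.integral_const_mul,
      ← intervalIntegral.integral_sub (hi.const_mul _) (hi.continuousOn_mul (by fun_prop))]
    congr 1 with v
    ring
  have hnum : ∫ u in xnode n k - π..xnode n k + π, (a + π - u) * (Jker n b k u * trigPi s y u) =
      trigPi s y (xnode n k) * ((a + π - xnode n k) * I - J) := by
    rw [integral_mul_Jker_mul_trigPi s y n b k htrig (fun u => a + π - u), hsplit]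
  have hden : ∫ u in xnode n k - π..xnode n k + π, Jker n b k u * trigPi s y u =
      trigPi s y (xnode n k) * I := by
    simpa using integral_mul_Jker_mul_trigPi s y n b k htrig (fun _ => 1)
  have hdiff : (∫ x in a - π..a + π, tfun s y n b k x) - (a + π - xnode n k) = -(J / I) := by
    rw [integral_tfun_eq, hnum, hden]
    field_simp
    ring
  rw [hdiff, abs_neg, abs_div, abs_of_pos hmass, div_le_iff₀ hmass]
  exact hmoment

end Tfun

section Nodes

theorem apply_add_zsmul {G H : Type*} [AddGroup G] [AddGroup H] {f : G → H} {p : G} {c : H}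
    (h : ∀ x, f (x + p) = f x - c) (x : G) (m : ℤ) : f (x + m • p) = f x - m • c := by
  let F : AddConstMap G H p (-c) := ⟨f, fun x => by rw [h, sub_eq_add_neg]⟩
  simpa [F, sub_eq_add_neg] using AddConstMapClass.map_add_zsmul F x m

variable {y : ℤ → ℝ} {n : ℕ}

theorem mem_Ico_xnode_jIdx (hn : 0 < n) (i : ℤ) :
    y i ∈ Ico (xnode n (jIdx y n i)) (xnode n (jIdx y n i - 1)) := by
  have hh : 0 < π / n := by positivity
  have hy : -(y i) * n / π * (π / n) = -(y i) := by field_simp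
  have hle := mul_le_mul_of_nonneg_right (Int.le_ceil (-(y i) * n / π)) hh.le
  have hlt := mul_lt_mul_of_pos_right (Int.ceil_lt_add_one (-(y i) * n / π)) hh
  rw [hy] at hle
  rw [add_mul, hy] at hlt
  rw [mem_Ico, xnode_sub, Int.cast_one, xnode, jIdx]
  constructor <;> linarith

theorem memH.le_abs_xnode_sub (hn : 0 < n) {m : ℕ} {j : ℤ} (hj : memH y n m j) (i : ℤ) :
    (m - 1) * (π / n) ≤ |xnode n j - y i| := by
  obtain ⟨hle, hlt⟩ := mem_Ico_xnode_jIdx (y := y) hn i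
  have hO : xnode n j ∉ Oint y n m i := fun h => hj (mem_iUnion_of_mem i h)
  rw [Oint, mem_Ioo, not_and_or, not_lt, not_lt, add_assoc, xnode_add, xnode_sub] at hO
  rw [xnode_sub] at hlt
  push_cast at hO hlt
  rw [le_abs]
  rcases hO with hO | hO
  · right
    linarith [show 0 < π / n by positivity]
  · left
    linarith

theorem half_le_abs_half_sub_add_mul_pi {p : ℤ} {δ x : ℝ}
    (hper : ∀ i, y (i + p) = y i - 2 * π) (hx : ∀ i, δ ≤ |x - y i|) (i m : ℤ) :
    δ / 2 ≤ |(x - y i) / 2 + m * π| := by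
  have h : (x - y i) / 2 + m * π = (x - y (i + m • p)) / 2 := by
    rw [apply_add_zsmul hper, zsmul_eq_mul]
    ring
  rw [h, abs_div, abs_two]
  linarith [hx (i + m • p)]

end Nodes

section Normalization

variable {s : ℕ} {y : ℤ → ℝ} {n b : ℕ} {j k : ℤ}

theorem abs_integral_tfun_sub_le_of_memH (hper : ∀ i : ℤ, y (i + 2 * (s : ℤ)) = y i - 2 * π)
    (hn : 0 < n) (hb : s + 2 ≤ b) (hj : memH y n 20 j)
    (hk : |xnode n j - xnode n k| ≤ 10 * (π / n)) (a : ℝ) :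
    |(∫ x in a - π..a + π, tfun s y n b k x) - (a + π - xnode n k)| ≤ 10 * (π / n) := by
  have hdist (i : ℤ) : 9 * (π / n) ≤ |xnode n k - y i| := by
    have hji := hj.le_abs_xnode_sub hn i
    push_cast at hji
    linarith [abs_sub_le (xnode n j) (xnode n k) (y i)]
  have hhalf := half_le_abs_half_sub_add_mul_pi hper hdist
  refine abs_integral_tfun_sub_le hn ?_ hb (fun i => ?_) a
  · linarith [le_pi_div_two_of_forall_le_abs_add (hhalf 0)]
  · exact sin_le_abs_sin_of_forall_le_abs_add (by positivity) (hhalf i)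

theorem stmt12_tau_normalization_general
    (hper : ∀ i : ℤ, y (i + 2 * (s : ℤ)) = y i - 2 * π)
    (hn : 0 < n) (hb : s + 2 ≤ b) (hj : memH y n 20 j) :
    ∃ α : ℝ, 0 ≤ α ∧ α ≤ 1 ∧ taufun s y n b j α (xnode n j + π) = π := by
  have hh : 0 < 10 * (π / n) := by positivity
  have hright : xnode n (j + 10) = xnode n j - 10 * (π / n) := by simp [xnode_add]
  have hleft : xnode n (j - 10) = xnode n j + 10 * (π / n) := by simp [xnode_sub]
  have hge : π ≤ ∫ u in xnode n j - π..xnode n j + π, tfun s y n b (j + 10) u := by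
    have := abs_integral_tfun_sub_le_of_memH hper hn hb hj (k := j + 10)
      (by rw [hright, sub_sub_cancel, abs_of_pos hh]) (xnode n j)
    linarith [(abs_le.mp this).1]
  have hle : ∫ u in xnode n j - π..xnode n j + π, tfun s y n b (j - 10) u ≤ π := by
    have := abs_integral_tfun_sub_le_of_memH hper hn hb hj (k := j - 10)
      (by rw [hleft, sub_add_cancel_left, abs_neg, abs_of_pos hh]) (xnode n j)
    linarith [(abs_le.mp this).2]
  obtain ⟨β, α, hβ, hα, hsum, hcomb⟩ := (Convex.mem_Icc (hle.trans hge)).mp ⟨hle, hge⟩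
  refine ⟨α, hα, by linarith, ?_⟩
  rw [taufun, ← eq_sub_of_add_eq hsum, add_comm]
  exact hcomb

end Normalization

theorem stmt12_tau_normalization
    (s : ℕ) (hs : 0 < s) (y : ℤ → ℝ)
    (hper : ∀ i : ℤ, y (i + 2 * (s : ℤ)) = y i - 2 * Real.pi)
    (hmono : ∀ i : ℤ, 1 ≤ i → i < 2 * (s : ℤ) → y (i + 1) < y i)
    (hlow : -Real.pi ≤ y (2 * (s : ℤ))) (hhigh : y 1 < Real.pi)
    (N : ℕ) (hN : ∀ n : ℕ, N ≤ n → ∀ i : ℤ, 1 ≤ i → i ≤ 2 * (s : ℤ) →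
      Oint y n 30 i ∩ Oint y n 30 (i - 1) = ∅)
    (n : ℕ) (hn : N ≤ n) (hn0 : 0 < n)
    (b : ℕ) (hb : s + 2 ≤ b)
    (j : ℤ) (hj : memH y n 20 j) (hjn : |j| ≤ (n : ℤ)) :
    ∃ α : ℝ, 0 ≤ α ∧ α ≤ 1 ∧ taufun s y n b j α (xnode n j + Real.pi) = Real.pi :=
  stmt12_tau_normalization_general hper hn0 hb hj
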